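/- arXiv:1611.02249 — 2 statements merged into one kernel-verified Lean document; each statement's English description precedes it below -/
import Mathlib

section
/- Let U, P, L be the parsimonious relations on the 28-element set H of major, minor, and augmented triads. In the monoid of binary relations on H under relational composition, the compositions U·P = U·L and P·U = L·U (where R·R' denotes the composite relation first applying R then R', i.e. the monoid product corresponding to the word read left to right). -/
/-- The 28-element set of the 24 major and minor triads and the 4 augmented triads:
`Sum.inl n` is the major triad `n_M`, `Sum.inr (Sum.inl n)` is the minor triad `n_m`,
and `Sum.inr (Sum.inr k)` is the augmented triad `k_aug`. -/
abbrev Htriads : Type := (ZMod 12) ⊕ (ZMod 12) ⊕ (ZMod 4)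

/-- Binary relations on `Htriads`. -/
abbrev MRel : Type := Htriads → Htriads → Prop

/-- The monoid of binary relations on `Htriads`: `r * s` relates `x` to `z` iff there is `y`
with `x r y` and `y s z` (i.e. first apply `r`, then `s`), and `1` is the equality relation. -/
instance : Monoid MRel where
  one := fun x y => x = y
  mul := fun r s => fun x z => ∃ y, r x y ∧ s y z
  mul_assoc r s t := by
    funext x z
    apply propext
    constructor
    · rintro ⟨y, ⟨w, hw1, hw2⟩, hy⟩
      exact ⟨w, hw1, y, hw2, hy⟩
    · rintro ⟨w, hw1, y, hy1, hy2⟩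
      exact ⟨y, ⟨w, hw1, hy1⟩, hy2⟩
  one_mul r := by
    funext x z
    apply propext
    constructor
    · rintro ⟨y, rfl, h⟩
      exact h
    · intro h
      exact ⟨x, rfl, h⟩
  mul_one r := by
    funext x z
    apply propext
    constructor
    · rintro ⟨y, h, rfl⟩
      exact h
    · intro h
      exact ⟨z, h, rfl⟩

/-- The major triad on root `n`. -/
def maj (n : ZMod 12) : Htriads := Sum.inl n
/-- The minor triad on root `n`. -/
def mino (n : ZMod 12) : Htriads := Sum.inr (Sum.inl n)
/-- The augmented triad `k_aug`, `k ∈ ℤ/4`. -/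
def aug (k : ZMod 4) : Htriads := Sum.inr (Sum.inr k)

/-- Reduction mod 4 of a pitch class mod 12. -/
def m4 (n : ZMod 12) : ZMod 4 := ZMod.castHom (show (4:ℕ) ∣ 12 by norm_num) (ZMod 4) n

/-- The relation `𝒰`: the symmetric relation relating exactly `n_M` with `(n mod 4)_aug`
and `n_m` with `((n+3) mod 4)_aug`. -/
def Urel : MRel := fun x y =>
  (∃ n : ZMod 12, x = maj n ∧ y = aug (m4 n)) ∨
  (∃ n : ZMod 12, x = aug (m4 n) ∧ y = maj n) ∨
  (∃ n : ZMod 12, x = mino n ∧ y = aug (m4 (n + 3))) ∨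
  (∃ n : ZMod 12, x = aug (m4 (n + 3)) ∧ y = mino n)

/-- The relation `𝒫`: the symmetric relation relating exactly `n_M` with `n_m`,
and each augmented triad with itself. -/
def Prel : MRel := fun x y =>
  (∃ n : ZMod 12, x = maj n ∧ y = mino n) ∨
  (∃ n : ZMod 12, x = mino n ∧ y = maj n) ∨
  (∃ k : ZMod 4, x = aug k ∧ y = aug k)

/-- The relation `ℒ`: the symmetric relation relating exactly `n_M` with `(n+4)_m`,
and each augmented triad with itself. -/
def Lrel : MRel := fun x y =>
  (∃ n : ZMod 12, x = maj n ∧ y = mino (n + 4)) ∨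
  (∃ n : ZMod 12, x = mino (n + 4) ∧ y = maj n) ∨
  (∃ k : ZMod 4, x = aug k ∧ y = aug k)

/-- Douthett's parsimonious relation `𝒮 = P_{1,0}` on major, minor and augmented triads. -/
def Srel : MRel := fun x y =>
  (∃ n : ZMod 12, x = maj n ∧ y = mino n) ∨
  (∃ n : ZMod 12, x = mino n ∧ y = maj n) ∨
  (∃ n : ZMod 12, x = maj n ∧ y = mino (n + 4)) ∨
  (∃ n : ZMod 12, x = mino (n + 4) ∧ y = maj n) ∨
  (∃ n : ZMod 12, x = maj n ∧ y = aug (m4 n)) ∨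
  (∃ n : ZMod 12, x = aug (m4 n) ∧ y = maj n) ∨
  (∃ n : ZMod 12, x = mino n ∧ y = aug (m4 (n + 3))) ∨
  (∃ n : ZMod 12, x = aug (m4 (n + 3)) ∧ y = mino n)

/-- Douthett's parsimonious relation `𝒯 = P_{2,0}` on major, minor and augmented triads. -/
def Trel : MRel := fun x y =>
  (∃ n : ZMod 12, x = maj n ∧ y = maj (n + 4)) ∨
  (∃ n : ZMod 12, x = maj n ∧ y = maj (n + 8)) ∨
  (∃ n : ZMod 12, x = maj n ∧ y = mino (n + 1)) ∨
  (∃ n : ZMod 12, x = mino (n + 1) ∧ y = maj n) ∨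
  (∃ n : ZMod 12, x = maj n ∧ y = mino (n + 5)) ∨
  (∃ n : ZMod 12, x = mino (n + 5) ∧ y = maj n) ∨
  (∃ n : ZMod 12, x = maj n ∧ y = aug (m4 (n + 3))) ∨
  (∃ n : ZMod 12, x = aug (m4 (n + 3)) ∧ y = maj n) ∨
  (∃ n : ZMod 12, x = mino n ∧ y = mino (n + 4)) ∨
  (∃ n : ZMod 12, x = mino n ∧ y = mino (n + 8)) ∨
  (∃ n : ZMod 12, x = mino n ∧ y = aug (m4 n)) ∨
  (∃ n : ZMod 12, x = aug (m4 n) ∧ y = mino n)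

/-!
The neo-Riemannian operations `P` and `L` differ by a Schritt: `L` is `P` preceded by the
permutation of the triads raising major triads and lowering minor triads by a major third.
Four semitones are `0` modulo `4`, so this permutation preserves the augmented triad that `U`
attaches to a consonant triad. Hence `U` absorbs it, which gives `U·P = U·L`; taking converses of
these symmetric relations gives `P·U = L·U`.
-/

section Composition

variable {α β β' γ : Type*}

theorem comp_eq_comp_of_surjective {f : β → β'} (hf : f.Surjective)
    {r : α → β → Prop} {r' : α → β' → Prop} {s : β → γ → Prop} {s' : β' → γ → Prop}
    (hr : ∀ x y, r x y ↔ r' x (f y)) (hs : ∀ y z, s y z ↔ s' (f y) z) :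
    Relation.Comp r s = Relation.Comp r' s' := by
  ext x z
  simp only [Relation.Comp, hf.exists, hr, hs]

theorem flip_comp_of_symm (r s : α → α → Prop) [Std.Symm r] [Std.Symm s] :
    flip (Relation.Comp r s) = Relation.Comp s r := by
  rw [Relation.flip_comp, Std.Symm.flip_eq, Std.Symm.flip_eq]

theorem comp_eq_comp_swap {r s t : α → α → Prop} [Std.Symm r] [Std.Symm s] [Std.Symm t]
    (h : Relation.Comp r s = Relation.Comp r t) : Relation.Comp s r = Relation.Comp t r := by
  rw [← flip_comp_of_symm r s, h, flip_comp_of_symm]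

end Composition

theorem MRel.mul_eq_comp (r s : MRel) : r * s = Relation.Comp r s := rfl

instance : Std.Symm Urel where
  symm := by
    rintro x y (⟨n, hx, hy⟩ | ⟨n, hx, hy⟩ | ⟨n, hx, hy⟩ | ⟨n, hx, hy⟩)
    · exact .inr (.inl ⟨n, hy, hx⟩)
    · exact .inl ⟨n, hy, hx⟩
    · exact .inr (.inr (.inr ⟨n, hy, hx⟩))
    · exact .inr (.inr (.inl ⟨n, hy, hx⟩))

instance : Std.Symm Prel where
  symm := by
    rintro x y (⟨n, hx, hy⟩ | ⟨n, hx, hy⟩ | ⟨k, hx, hy⟩)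
    · exact .inr (.inl ⟨n, hy, hx⟩)
    · exact .inl ⟨n, hy, hx⟩
    · exact .inr (.inr ⟨k, hy, hx⟩)

instance : Std.Symm Lrel where
  symm := by
    rintro x y (⟨n, hx, hy⟩ | ⟨n, hx, hy⟩ | ⟨k, hx, hy⟩)
    · exact .inr (.inl ⟨n, hy, hx⟩)
    · exact .inl ⟨n, hy, hx⟩
    · exact .inr (.inr ⟨k, hy, hx⟩)

section Neighbours

variable (x : Htriads) (n : ZMod 12) (k : ZMod 4)

theorem urel_maj_right : Urel x (maj n) ↔ x = aug (m4 n) := by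
  simp [Urel, maj, mino, aug]

theorem urel_mino_right : Urel x (mino n) ↔ x = aug (m4 (n + 3)) := by
  simp [Urel, maj, mino, aug]

theorem prel_maj_left : Prel (maj n) x ↔ x = mino n := by
  simp [Prel, maj, mino, aug]

theorem prel_mino_left : Prel (mino n) x ↔ x = maj n := by
  simp [Prel, maj, mino, aug]

theorem prel_aug_left : Prel (aug k) x ↔ x = aug k := by
  simp [Prel, maj, mino, aug]

theorem lrel_maj_left : Lrel (maj n) x ↔ x = mino (n + 4) := by
  simp [Lrel, maj, mino, aug]

theorem lrel_mino_left : Lrel (mino n) x ↔ x = maj (n - 4) := by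
  simp [Lrel, maj, mino, aug, ← sub_eq_iff_eq_add]

theorem lrel_aug_left : Lrel (aug k) x ↔ x = aug k := by
  simp [Lrel, maj, mino, aug]

end Neighbours

theorem m4_add (m n : ZMod 12) : m4 (m + n) = m4 m + m4 n := map_add _ m n

theorem m4_four : m4 4 = 0 := by decide

theorem m4_add_four (n : ZMod 12) : m4 (n + 4) = m4 n := by
  rw [m4_add, m4_four, add_zero]

theorem m4_sub_four (n : ZMod 12) : m4 (n - 4) = m4 n := by
  rw [← m4_add_four (n - 4), sub_add_cancel]

/-- The Schritt by a major third: the permutation `n_M ↦ (n + 4)_M`, `n_m ↦ (n - 4)_m` of the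
triads, through which `P` and `L` are compared. It is taken to fix the augmented triads, as `P`
and `L` do. -/
def majorThirdSchritt : Equiv.Perm Htriads :=
  Equiv.sumCongr (Equiv.addRight 4) (Equiv.sumCongr (Equiv.subRight 4) (Equiv.refl _))

section Schritt

variable (n : ZMod 12) (k : ZMod 4)

theorem majorThirdSchritt_maj : majorThirdSchritt (maj n) = maj (n + 4) := rfl

theorem majorThirdSchritt_mino : majorThirdSchritt (mino n) = mino (n - 4) := rfl

theorem majorThirdSchritt_aug : majorThirdSchritt (aug k) = aug k := rfl

end Schritt

theorem Htriads.forall {p : Htriads → Prop} :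
    (∀ x, p x) ↔ (∀ n, p (maj n)) ∧ (∀ n, p (mino n)) ∧ ∀ k, p (aug k) := by
  simp only [Sum.forall, maj, mino, aug]

theorem urel_majorThirdSchritt_right (x y : Htriads) :
    Urel x (majorThirdSchritt y) ↔ Urel x y := by
  revert y
  refine Htriads.forall.2 ⟨fun n => ?_, fun n => ?_, fun k => ?_⟩
  · rw [majorThirdSchritt_maj, urel_maj_right, urel_maj_right, m4_add_four]
  · rw [majorThirdSchritt_mino, urel_mino_right, urel_mino_right, m4_add, m4_add, m4_sub_four]
  · rw [majorThirdSchritt_aug]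

theorem lrel_iff_prel_majorThirdSchritt (y z : Htriads) :
    Lrel y z ↔ Prel (majorThirdSchritt y) z := by
  revert y
  refine Htriads.forall.2 ⟨fun n => ?_, fun n => ?_, fun k => ?_⟩
  · rw [majorThirdSchritt_maj, lrel_maj_left, prel_maj_left]
  · rw [majorThirdSchritt_mino, lrel_mino_left, prel_mino_left]
  · rw [majorThirdSchritt_aug, lrel_aug_left, prel_aug_left]

theorem urel_comp_prel_eq_urel_comp_lrel :
    Relation.Comp Urel Prel = Relation.Comp Urel Lrel :=
  .symm <| comp_eq_comp_of_surjective majorThirdSchritt.surjective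
    (fun x y => (urel_majorThirdSchritt_right x y).symm) lrel_iff_prel_majorThirdSchritt

/-- `U·P = U·L` and `P·U = L·U`, where `·` is the monoid product
(first apply the left relation, then the right one). -/
theorem stmt3 : Urel * Prel = Urel * Lrel ∧ Prel * Urel = Lrel * Urel := by
  simp only [MRel.mul_eq_comp]
  exact ⟨urel_comp_prel_eq_urel_comp_lrel, comp_eq_comp_swap urel_comp_prel_eq_urel_comp_lrel⟩
end

section
/- Let U and P be the parsimonious relations on the 28-element set H of major, minor, and augmented triads. In the monoid of binary relations on H under relational composition, (U·P)²·U² = P·(U·P)²·U²·P and U²·(P·U)² = P·U²·(P·U)²·P (products of relations written as words). -/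
/-!
Each augmented triad together with its six `U`-neighbours forms a Weitzmann region. The relation `U`
relates two triads iff they lie in the same region and exactly one of them is augmented, while `P`
is an involution that moves every consonant triad to an adjacent region and fixes the augmented
triads. Along the word `U·P·U·P·U·U` exactly one of the two letters `P` meets a consonant triad, and
that triad may be any one of its region. Hence the word relates `x` to `z` iff they are both
augmented or both consonant and their regions differ by an odd number. Since `P` changes the regions
of two consonant triads both by odd amounts, this relation is invariant under `P`. It is also
symmetric, so it equals the reversed word `U·U·P·U·P·U` as well.
-/

theorem mrel_mul_apply {R S : MRel} {x z : Htriads} : (R * S) x z ↔ ∃ y, R x y ∧ S y z := Iff.rfl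

theorem flip_mul (R S : MRel) : (flip (R * S) : MRel) = flip S * flip R := by
  ext x z
  exact exists_congr fun _ ↦ and_comm

@[elab_as_elim]
theorem triad_cases {motive : Htriads → Prop} (maj : ∀ n, motive (maj n))
    (mino : ∀ n, motive (mino n)) (aug : ∀ k, motive (aug k)) (x : Htriads) : motive x :=
  match x with
  | .inl n => maj n
  | .inr (.inl n) => mino n
  | .inr (.inr k) => aug k

/-- The augmented triads. The other triads, major or minor, are the consonant ones, so consonance is
expressed as `¬IsAug x`. -/
def IsAug (x : Htriads) : Prop := ∃ k, x = aug k

/-- The Weitzmann region of a triad, indexed by the augmented triad which the region contains: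
a consonant triad lies in the region of the augmented triad obtained by moving one of its notes by a
semitone. -/
def region : Htriads → ZMod 4 := Sum.elim m4 (Sum.elim (fun n ↦ m4 (n + 3)) id)

/-- The function whose graph is `Prel`: it exchanges the parallel triads `n_M` and `n_m`, and fixes
the augmented triads. -/
def parallel : Htriads → Htriads := Sum.elim mino (Sum.elim maj aug)

@[simp] theorem isAug_aug (k : ZMod 4) : IsAug (aug k) := ⟨k, rfl⟩

@[simp] theorem not_isAug_maj (n : ZMod 12) : ¬IsAug (maj n) := by simp [IsAug, maj, aug]

@[simp] theorem not_isAug_mino (n : ZMod 12) : ¬IsAug (mino n) := by simp [IsAug, mino, aug]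

theorem m4_add_three (n : ZMod 12) : m4 (n + 3) = m4 n + 3 := map_add _ n 3

@[simp] theorem region_maj (n : ZMod 12) : region (maj n) = m4 n := rfl

@[simp] theorem region_mino (n : ZMod 12) : region (mino n) = m4 n + 3 := m4_add_three n

@[simp] theorem region_aug (k : ZMod 4) : region (aug k) = k := rfl

@[simp] theorem parallel_maj (n : ZMod 12) : parallel (maj n) = mino n := rfl

@[simp] theorem parallel_mino (n : ZMod 12) : parallel (mino n) = maj n := rfl

@[simp] theorem parallel_aug (k : ZMod 4) : parallel (aug k) = aug k := rfl

theorem odd_iff_eq_three_or_eq_neg_three {a : ZMod 4} : Odd a ↔ a = 3 ∨ a = -3 := by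
  unfold Odd
  decide +revert

theorem m4_surjective : Function.Surjective m4 := ZMod.castHom_surjective _

section Parallel

variable {R : MRel} {x y z : Htriads}

theorem parallel_involutive : Function.Involutive parallel := by
  intro x
  cases x using triad_cases <;> rfl

@[simp] theorem isAug_parallel : IsAug (parallel x) ↔ IsAug x := by
  cases x using triad_cases <;> simp

theorem parallel_eq_self (hx : IsAug x) : parallel x = x := by
  obtain ⟨k, rfl⟩ := hx
  exact parallel_aug k

theorem odd_region_parallel_sub (hx : ¬IsAug x) : Odd (region (parallel x) - region x) := by
  cases x using triad_cases with
  | maj n => simp [odd_iff_eq_three_or_eq_neg_three]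
  | mino n => simp [odd_iff_eq_three_or_eq_neg_three]
  | aug k => exact absurd (isAug_aug k) hx

theorem exists_not_isAug_region_eq_iff_odd_sub {k l : ZMod 4} :
    (∃ t, ¬IsAug t ∧ region t = k ∧ region (parallel t) = l) ↔ Odd (l - k) := by
  constructor
  · rintro ⟨t, ht, rfl, rfl⟩
    exact odd_region_parallel_sub ht
  · intro h
    obtain ⟨n, rfl⟩ := m4_surjective k
    obtain ⟨m, rfl⟩ := m4_surjective l
    rcases odd_iff_eq_three_or_eq_neg_three.mp h with h_three | h_neg_three
    · exact ⟨maj n, by simp [← h_three]⟩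
    · exact ⟨mino m, by simp [← neg_eq_iff_eq_neg.mpr h_neg_three]⟩

theorem Prel_iff : Prel x y ↔ y = parallel x := by
  cases x using triad_cases <;> cases y using triad_cases <;> simp [Prel, parallel, maj, mino, aug]

theorem Prel_mul_apply : (Prel * R) x z ↔ R (parallel x) z := by
  simp [mrel_mul_apply, Prel_iff, -Sum.exists]

theorem mul_Prel_apply : (R * Prel) x z ↔ R x (parallel z) := by
  have h (y : Htriads) : z = parallel y ↔ y = parallel z := by
    rw [eq_comm, parallel_involutive.eq_iff, eq_comm]
  simp [mrel_mul_apply, Prel_iff, -Sum.exists, h]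

theorem flip_Prel : flip Prel = Prel := by
  ext x y
  simp only [flip, Prel_iff]
  rw [eq_comm, parallel_involutive.eq_iff]

theorem Prel_mul_mul_Prel_eq_self (hR : ∀ x z, R x z → R (parallel x) (parallel z)) :
    Prel * R * Prel = R := by
  ext x z
  rw [mul_Prel_apply, Prel_mul_apply]
  refine ⟨fun h ↦ ?_, hR x z⟩
  simpa only [parallel_involutive _] using hR _ _ h

end Parallel

section Weitzmann

variable {R : MRel} {x y z : Htriads} {k : ZMod 4}

theorem Urel_iff : Urel x y ↔ (IsAug x ↔ ¬IsAug y) ∧ region x = region y := by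
  cases x using triad_cases <;> cases y using triad_cases <;>
    simp only [isAug_aug, not_isAug_maj, not_isAug_mino, region_maj, region_mino, region_aug] <;>
    simp [Urel, maj, mino, aug, m4_add_three, eq_comm]

theorem flip_Urel : flip Urel = Urel := by
  ext x y
  simp only [flip, Urel_iff]
  tauto

theorem Urel_mul_apply_of_not_isAug (hx : ¬IsAug x) :
    (Urel * R) x z ↔ R (aug (region x)) z := by
  rw [mrel_mul_apply]
  constructor
  · rintro ⟨y, hxy, hyz⟩
    obtain ⟨h_type, h_region⟩ := Urel_iff.mp hxy
    obtain ⟨k, rfl⟩ : IsAug y := by tauto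
    rwa [h_region]
  · exact fun h ↦ ⟨_, Urel_iff.mpr (by simp [hx]), h⟩

theorem Urel_mul_aug_apply :
    (Urel * R) (aug k) z ↔ ∃ t, ¬IsAug t ∧ region t = k ∧ R t z := by
  simp [mrel_mul_apply, Urel_iff, and_assoc, eq_comm, -Sum.exists]

/-- Two triads are of the same type, both augmented or both consonant, and their Weitzmann regions
differ by an odd number. This is the relation denoted by both words of the theorem. -/
def oddShiftRel : MRel := fun x z ↦ (IsAug x ↔ IsAug z) ∧ Odd (region z - region x)

theorem flip_oddShiftRel : flip oddShiftRel = oddShiftRel := by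
  ext x z
  exact and_congr iff_comm (by rw [← neg_sub, odd_neg])

theorem oddShiftRel_parallel (h : oddShiftRel x z) : oddShiftRel (parallel x) (parallel z) := by
  refine ⟨by simpa using h.1, ?_⟩
  by_cases hx : IsAug x
  · rw [parallel_eq_self hx, parallel_eq_self (h.1.mp hx)]
    exact h.2
  · have hz : ¬IsAug z := mt h.1.mpr hx
    have h_split : region (parallel z) - region (parallel x) =
        (region (parallel z) - region z) + (region z - region x) -
          (region (parallel x) - region x) := by abel
    rw [h_split]
    exact ((odd_region_parallel_sub hz).add_odd h.2).sub_odd (odd_region_parallel_sub hx)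

theorem Urel_mul_Prel_mul_Urel_mul_aug_apply :
    (Urel * (Prel * (Urel * R))) (aug k) z ↔ ∃ l, Odd (l - k) ∧ R (aug l) z := by
  simp only [Urel_mul_aug_apply, Prel_mul_apply, ← exists_not_isAug_region_eq_iff_odd_sub]
  constructor
  · rintro ⟨t, ht, ht_region, h⟩
    rw [Urel_mul_apply_of_not_isAug (mt isAug_parallel.mp ht)] at h
    exact ⟨_, ⟨t, ht, ht_region, rfl⟩, h⟩
  · rintro ⟨l, ⟨t, ht, ht_region, rfl⟩, h⟩
    exact ⟨t, ht, ht_region, (Urel_mul_apply_of_not_isAug (mt isAug_parallel.mp ht)).mpr h⟩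

theorem Urel_aug_iff : Urel (aug k) z ↔ ¬IsAug z ∧ k = region z := by
  simp [Urel_iff]

theorem Urel_mul_Urel_aug_iff : (Urel * Urel) (aug k) z ↔ IsAug z ∧ k = region z := by
  rw [Urel_mul_aug_apply]
  constructor
  · rintro ⟨t, ht, rfl, h⟩
    obtain ⟨h_type, h_region⟩ := Urel_iff.mp h
    exact ⟨by tauto, h_region⟩
  · rintro ⟨hz, rfl⟩
    obtain ⟨n, hn⟩ := m4_surjective (region z)
    exact ⟨maj n, by simp [Urel_iff, hz, hn]⟩

theorem Urel_mul_Prel_sq_mul_Urel_sq : (Urel * Prel) ^ 2 * Urel ^ 2 = oddShiftRel := by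
  ext x z
  simp only [pow_two, mul_assoc]
  by_cases hx : IsAug x
  · obtain ⟨k, rfl⟩ := hx
    calc
      (Urel * (Prel * (Urel * (Prel * (Urel * Urel))))) (aug k) z
        ↔ ∃ l, Odd (l - k) ∧ (Urel * Urel) (aug l) z := by
          simp only [Urel_mul_Prel_mul_Urel_mul_aug_apply, Prel_mul_apply, parallel_aug]
      _ ↔ oddShiftRel (aug k) z := by simp [Urel_mul_Urel_aug_iff, oddShiftRel, and_comm]
  · calc
      (Urel * (Prel * (Urel * (Prel * (Urel * Urel))))) x z
        ↔ ∃ l, Odd (l - region x) ∧ Urel (aug l) z := by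
          simp only [Urel_mul_apply_of_not_isAug hx, Prel_mul_apply, parallel_aug,
            Urel_mul_Prel_mul_Urel_mul_aug_apply]
      _ ↔ oddShiftRel x z := by simp [Urel_aug_iff, oddShiftRel, hx, and_comm]

theorem Urel_sq_mul_Prel_mul_Urel_sq : Urel ^ 2 * (Prel * Urel) ^ 2 = oddShiftRel := by
  rw [← flip_oddShiftRel, ← Urel_mul_Prel_sq_mul_Urel_sq]
  simp only [pow_two, flip_mul, flip_Urel, flip_Prel]

end Weitzmann

/-- `(U·P)²·U² = P·(U·P)²·U²·P` and `U²·(P·U)² = P·U²·(P·U)²·P`. -/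
theorem stmt5 :
    (Urel * Prel) ^ 2 * Urel ^ 2 = Prel * (Urel * Prel) ^ 2 * Urel ^ 2 * Prel ∧
    Urel ^ 2 * (Prel * Urel) ^ 2 = Prel * Urel ^ 2 * (Prel * Urel) ^ 2 * Prel := by
  have h_conj : Prel * oddShiftRel * Prel = oddShiftRel :=
    Prel_mul_mul_Prel_eq_self fun _ _ ↦ oddShiftRel_parallel
  rw [mul_assoc Prel (_ ^ 2), mul_assoc Prel (_ ^ 2), Urel_mul_Prel_sq_mul_Urel_sq,
    Urel_sq_mul_Prel_mul_Urel_sq, h_conj]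
  exact ⟨rfl, rfl⟩
end
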